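/- arXiv:1111.0352 — 7 statements merged into one kernel-verified Lean document; each statement's English description precedes it below -/
import Mathlib

section
/- Let x_1, …, x_n ∈ ℝ^d and λ ≥ 0. Let P = {ℓ_1, …, ℓ_k} be a partition of {1,…,n} into k nonempty clusters with centroids μ_c = (1/|ℓ_c|) ∑_{i ∈ ℓ_c} x_i, and define the DP-means objective F(P) = ∑_{c=1}^k ∑_{i ∈ ℓ_c} ‖x_i − μ_c‖² + λ k. Define a new assignment z′ as follows: for each i, if min_{1 ≤ c ≤ k} ‖x_i − μ_c‖² ≤ λ then z′(i) is a minimizing index c; otherwise x_i is placed in its own new singleton cluster. Let P′ be the resulting partition of {1,…,n} (the nonempty fibers of z′ over {1,…,k} together with the new singletons). Then F(P′) ≤ F(P). (This is the monotonicity claim of Theorem 3.1: one DP-means iteration does not increase the objective in equation (1).) -/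
open Finset

/-- The DP-means objective of the clustering given by the fibers of the
assignment map `w : Fin n → β` (only nonempty fibers, i.e. labels in the image
of `w`, count as clusters): the k-means cost with recomputed centroids plus
`λ` times the number of (nonempty) clusters. -/
noncomputable def dpMeansObjective {d n : ℕ} {β : Type} [Fintype β] [DecidableEq β]
    (x : Fin n → EuclideanSpace ℝ (Fin d)) (lam : ℝ) (w : Fin n → β) : ℝ :=
  ∑ b ∈ Finset.univ.image w,
      ∑ i ∈ Finset.univ.filter (fun i => w i = b),
        ‖x i - ((Finset.univ.filter (fun i => w i = b)).card : ℝ)⁻¹ •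
            ∑ j ∈ Finset.univ.filter (fun j => w j = b), x j‖ ^ 2
    + lam * ((Finset.univ.image w).card : ℝ)

theorem centroid_le {d n : ℕ} (x : Fin n → EuclideanSpace ℝ (Fin d)) (s : Finset (Fin n))
    (a : EuclideanSpace ℝ (Fin d)) :
    ∑ i ∈ s, ‖x i - (s.card : ℝ)⁻¹ • ∑ j ∈ s, x j‖ ^ 2 ≤ ∑ i ∈ s, ‖x i - a‖ ^ 2 := by
  rcases s.eq_empty_or_nonempty with rfl | hs
  · simp
  set m := (s.card : ℝ)⁻¹ • ∑ j ∈ s, x j with hm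
  have hc : (s.card : ℝ) ≠ 0 := by
    exact_mod_cast hs.card_pos.ne'
  have h0 : ∑ i ∈ s, (x i - m) = 0 := by
    rw [Finset.sum_sub_distrib, Finset.sum_const, ← Nat.cast_smul_eq_nsmul ℝ, hm, smul_smul,
      mul_inv_cancel₀ hc, one_smul, sub_self]
  have h1 : ∑ i ∈ s, inner ℝ (x i - m) (m - a) = 0 := by
    rw [← sum_inner, h0, inner_zero_left]
  have h2 : ∀ i ∈ s, ‖x i - m‖ ^ 2 + 2 * inner ℝ (x i - m) (m - a) ≤ ‖x i - a‖ ^ 2 := by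
    intro i _
    have h3 : x i - a = (x i - m) + (m - a) := by abel
    rw [h3, norm_add_sq_real]
    nlinarith [sq_nonneg ‖m - a‖]
  have h4 := Finset.sum_le_sum h2
  rw [Finset.sum_add_distrib, ← Finset.mul_sum, h1] at h4
  linarith

theorem objective_le {d n : ℕ} {β : Type} [Fintype β] [DecidableEq β]
    (x : Fin n → EuclideanSpace ℝ (Fin d)) (lam : ℝ) (w : Fin n → β)
    (ν : β → EuclideanSpace ℝ (Fin d)) :
    dpMeansObjective x lam w ≤
      ∑ i, ‖x i - ν (w i)‖ ^ 2 + lam * ((Finset.univ.image w).card : ℝ) := by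
  unfold dpMeansObjective
  gcongr
  rw [← Finset.sum_fiberwise_of_maps_to (s := Finset.univ) (t := Finset.univ.image w) (g := w)
    (fun i _ => Finset.mem_image_of_mem w (Finset.mem_univ i))]
  refine Finset.sum_le_sum fun b _ => (centroid_le x _ (ν b)).trans (le_of_eq ?_)
  refine Finset.sum_congr rfl fun i hi => ?_
  rw [(Finset.mem_filter.mp hi).2]

/-- One DP-means reassignment pass does not increase the DP-means objective:
given a partition of `{1,…,n}` into `k` nonempty clusters (the fibers of the
surjective assignment `z`) with centroids `μ`, reassigning every point either to
a nearest centroid (when some centroid is within squared distance `λ`) or to a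
brand-new singleton cluster (otherwise) yields a partition whose objective is no
larger. -/
theorem dpmeans_iteration_monotone
    (d n k : ℕ)
    (x : Fin n → EuclideanSpace ℝ (Fin d))
    (lam : ℝ) (hlam : 0 ≤ lam)
    (z : Fin n → Fin k) (hz : Function.Surjective z)
    (μ : Fin k → EuclideanSpace ℝ (Fin d))
    (hμ : ∀ c, μ c = ((Finset.univ.filter (fun i => z i = c)).card : ℝ)⁻¹ •
        ∑ i ∈ Finset.univ.filter (fun i => z i = c), x i)
    (z' : Fin n → Fin k ⊕ Fin n)
    (hz' : ∀ i,
      (∃ c, ‖x i - μ c‖ ^ 2 ≤ lam ∧ (∀ c', ‖x i - μ c‖ ^ 2 ≤ ‖x i - μ c'‖ ^ 2) ∧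
          z' i = Sum.inl c) ∨
      ((∀ c, lam < ‖x i - μ c‖ ^ 2) ∧ z' i = Sum.inr i)) :
    dpMeansObjective x lam z' ≤ dpMeansObjective x lam z := by
  classical
  have hR : dpMeansObjective x lam z = ∑ i, ‖x i - μ (z i)‖ ^ 2 + lam * (k : ℝ) := by
    unfold dpMeansObjective
    rw [Finset.image_univ_of_surjective hz, Finset.card_univ, Fintype.card_fin]
    congr 1
    rw [← Finset.sum_fiberwise (s := Finset.univ) (g := z)]
    refine Finset.sum_congr rfl fun b _ => ?_
    refine Finset.sum_congr rfl fun i hi => ?_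
    rw [(Finset.mem_filter.mp hi).2, hμ b]
  set S : Finset (Fin n) := Finset.univ.filter (fun i => ∀ c, lam < ‖x i - μ c‖ ^ 2) with hS
  have hcard : (Finset.univ.image z').card ≤ k + S.card := by
    have hsub : Finset.univ.image z' ⊆
        (Finset.univ.image (Sum.inl : Fin k → Fin k ⊕ Fin n)) ∪ S.image Sum.inr := by
      intro b hb
      obtain ⟨i, -, rfl⟩ := Finset.mem_image.mp hb
      rcases hz' i with ⟨c, -, -, h⟩ | ⟨h1, h⟩
      · rw [h]; simp
      · rw [h]; simp [hS, h1]
    calc _ ≤ _ := Finset.card_le_card hsub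
      _ ≤ _ := Finset.card_union_le _ _
      _ ≤ _ := by
        gcongr
        · exact Finset.card_image_le.trans (by simp)
        · exact Finset.card_image_le
  have hcard' : ((Finset.univ.image z').card : ℝ) ≤ k + S.card := by exact_mod_cast hcard
  have hpt : ∀ i ∈ (Finset.univ : Finset (Fin n)),
      ‖x i - Sum.elim μ x (z' i)‖ ^ 2 + (if ∀ c, lam < ‖x i - μ c‖ ^ 2 then lam else 0)
        ≤ ‖x i - μ (z i)‖ ^ 2 := by
    intro i _
    rcases hz' i with ⟨c, h1, h2, h⟩ | ⟨h1, h⟩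
    · have hn : ¬ ∀ c, lam < ‖x i - μ c‖ ^ 2 := fun h3 => absurd (h3 c) (not_lt.mpr h1)
      rw [h, if_neg hn]
      simpa using h2 (z i)
    · rw [h, if_pos h1]
      simpa using (h1 (z i)).le
  have hsum := Finset.sum_le_sum hpt
  rw [Finset.sum_add_distrib, ← Finset.sum_filter, Finset.sum_const, nsmul_eq_mul] at hsum
  have hO := objective_le x lam z' (Sum.elim μ x)
  have hm := mul_le_mul_of_nonneg_left hcard' hlam
  rw [hR]
  linarith
end

section
/- Let K be a real symmetric n×n matrix with eigenvalues β_1, …, β_n (listed with multiplicity), and let λ ∈ ℝ. Then for every k ∈ ℕ and every n×k real matrix Y satisfying Yᵀ Y = I_k, tr( Yᵀ (K − λ I) Y ) ≤ ∑_{i=1}^n max(β_i − λ, 0). (The upper-bound half of Theorem 5.2: no orthonormal matrix can exceed the value attained by thresholded eigenvectors in the relaxed DP-means objective.) -/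
open Finset Matrix

/-- Upper-bound half of Theorem 5.2: if `K` is a real symmetric `n × n` matrix
with eigenvalues `β 1, …, β n` (listed with multiplicity, i.e. `K = U D(β) Uᵀ`
for some orthogonal `U`), then for every `n × k` matrix `Y` with orthonormal
columns, `tr (Yᵀ (K - λ I) Y) ≤ ∑ i, max (β i - λ) 0`. -/
theorem relaxed_dpmeans_upper_bound
    (n : ℕ) (K : Matrix (Fin n) (Fin n) ℝ) (hK : K.IsSymm)
    (β : Fin n → ℝ)
    (U : Matrix (Fin n) (Fin n) ℝ) (hU : Uᵀ * U = 1)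
    (hKU : K = U * Matrix.diagonal β * Uᵀ)
    (lam : ℝ)
    (k : ℕ) (Y : Matrix (Fin n) (Fin k) ℝ) (hY : Yᵀ * Y = 1) :
    Matrix.trace (Yᵀ * (K - lam • (1 : Matrix (Fin n) (Fin n) ℝ)) * Y)
      ≤ ∑ i, max (β i - lam) 0 := by
  have hU' : U * Uᵀ = 1 := mul_eq_one_comm.mp hU
  obtain ⟨Z, hZ⟩ : ∃ Z, Z = Uᵀ * Y := ⟨_, rfl⟩
  have hYZ : Y = U * Z := by rw [hZ, ← Matrix.mul_assoc, hU', Matrix.one_mul]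
  have hZZ : Zᵀ * Z = 1 := by
    rw [hZ, Matrix.transpose_mul, Matrix.transpose_transpose, Matrix.mul_assoc,
      ← Matrix.mul_assoc U, hU', Matrix.one_mul, hY]
  obtain ⟨P, hP⟩ : ∃ P, P = Z * Zᵀ := ⟨_, rfl⟩
  have hPP : P * P = P := by
    rw [hP, Matrix.mul_assoc, ← Matrix.mul_assoc Zᵀ, hZZ, Matrix.one_mul]
  have hPt : Pᵀ = P := by
    rw [hP, Matrix.transpose_mul, Matrix.transpose_transpose]
  have hM : K - lam • (1 : Matrix (Fin n) (Fin n) ℝ)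
      = U * Matrix.diagonal (fun i => β i - lam) * Uᵀ := by
    have h1 : Matrix.diagonal (fun i => β i - lam)
        = Matrix.diagonal β - lam • (1 : Matrix (Fin n) (Fin n) ℝ) := by
      ext i j
      by_cases h : i = j
      · subst h; simp
      · simp [h]
    rw [h1, Matrix.mul_sub, Matrix.sub_mul, ← hKU, Matrix.mul_smul, Matrix.smul_mul,
      Matrix.mul_one, hU']
  have htr : Matrix.trace (Yᵀ * (K - lam • (1 : Matrix (Fin n) (Fin n) ℝ)) * Y)
      = ∑ i, (β i - lam) * P i i := by
    have h2 : Yᵀ * (K - lam • (1 : Matrix (Fin n) (Fin n) ℝ)) * Y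
        = Zᵀ * (Matrix.diagonal (fun i => β i - lam) * Z) := by
      rw [hM, hZ, Matrix.transpose_mul, Matrix.transpose_transpose]
      simp only [Matrix.mul_assoc]
    rw [h2, Matrix.trace_mul_comm, Matrix.mul_assoc, ← hP]
    simp [Matrix.trace, Matrix.diagonal_mul]
  rw [htr]
  refine Finset.sum_le_sum fun i _ => ?_
  have hsq : P i i = ∑ j, P i j ^ 2 := by
    conv_lhs => rw [← hPP, Matrix.mul_apply]
    refine Finset.sum_congr rfl fun j _ => ?_
    have : P j i = P i j := congrFun (congrFun hPt i) j
    rw [this, sq]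
  have h0 : 0 ≤ P i i := by
    rw [hsq]; exact Finset.sum_nonneg fun j _ => sq_nonneg _
  have h1 : P i i ^ 2 ≤ P i i := by
    conv_rhs => rw [hsq]
    exact Finset.single_le_sum (f := fun j => P i j ^ 2)
      (fun j _ => sq_nonneg _) (Finset.mem_univ i)
  have h2 : P i i ≤ 1 := by nlinarith
  calc (β i - lam) * P i i ≤ max (β i - lam) 0 * P i i :=
        mul_le_mul_of_nonneg_right (le_max_left _ _) h0
    _ ≤ max (β i - lam) 0 := mul_le_of_le_one_right (le_max_right _ _) h2
end

section
/- Let K be a real symmetric n×n matrix with eigenvalues β_1, …, β_n (listed with multiplicity), and let λ ∈ ℝ. Then there exist k ∈ ℕ and an n×k real matrix Y with Yᵀ Y = I_k such that tr( Yᵀ (K − λ I) Y ) = ∑_{i=1}^n max(β_i − λ, 0); in particular, one may take k to be the number of eigenvalues of K strictly greater than λ and the columns of Y to be orthonormal eigenvectors of K corresponding to those eigenvalues. (The attainment half of Theorem 5.2: the optimal relaxed cluster indicator matrix is obtained by stacking all eigenvectors of K whose eigenvalues exceed λ.) -/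
open Finset Matrix

/-- Attainment half of Theorem 5.2: if `K` is a real symmetric `n × n` matrix
with eigenvalues `β 1, …, β n` (listed with multiplicity, i.e. `K = U D(β) Uᵀ`
for some orthogonal `U`), then taking `k` to be the number of eigenvalues
strictly greater than `λ`, there is an `n × k` matrix `Y` with orthonormal
columns, each column an eigenvector of `K` for an eigenvalue exceeding `λ`,
achieving `tr (Yᵀ (K - λ I) Y) = ∑ i, max (β i - λ) 0`. -/
theorem relaxed_dpmeans_attained
    (n : ℕ) (K : Matrix (Fin n) (Fin n) ℝ) (hK : K.IsSymm)
    (β : Fin n → ℝ)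
    (U : Matrix (Fin n) (Fin n) ℝ) (hU : Uᵀ * U = 1)
    (hKU : K = U * Matrix.diagonal β * Uᵀ)
    (lam : ℝ) :
    ∃ Y : Matrix (Fin n) (Fin ((Finset.univ.filter (fun i => lam < β i)).card)) ℝ,
      Yᵀ * Y = 1 ∧
      (∀ j, ∃ i, lam < β i ∧
        K.mulVec (fun r => Y r j) = β i • (fun r => Y r j)) ∧
      Matrix.trace (Yᵀ * (K - lam • (1 : Matrix (Fin n) (Fin n) ℝ)) * Y)
        = ∑ i, max (β i - lam) 0 := by
  set S := Finset.univ.filter (fun i => lam < β i) with hS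
  let e : Fin S.card → Fin n := fun j => (S.equivFin.symm j : Fin n)
  have he : Function.Injective e :=
    Subtype.val_injective.comp S.equivFin.symm.injective
  have hmem : ∀ j, lam < β (e j) := fun j => by
    have h := (S.equivFin.symm j).2
    exact (Finset.mem_filter.mp h).2
  have hKU' : K * U = U * Matrix.diagonal β := by
    rw [hKU, Matrix.mul_assoc, hU, Matrix.mul_one]
  have hYY : (U.submatrix id e)ᵀ * (U.submatrix id e) = 1 := by
    have h : (U.submatrix id e)ᵀ * (U.submatrix id e) = (Uᵀ * U).submatrix e e := rfl
    rw [h, hU, Matrix.submatrix_one _ he]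
  refine ⟨U.submatrix id e, hYY, fun j => ⟨e j, hmem j, ?_⟩, ?_⟩
  · ext r
    have h := congrFun (congrFun hKU' r) (e j)
    rw [Matrix.mul_diagonal] at h
    have h2 : (K.mulVec fun r => U.submatrix id e r j) r = (K * U) r (e j) := rfl
    rw [h2, h]
    simp [mul_comm]
  · have h : (U.submatrix id e)ᵀ * (K - lam • (1 : Matrix (Fin n) (Fin n) ℝ)) * U.submatrix id e
        = (Uᵀ * (K - lam • (1 : Matrix (Fin n) (Fin n) ℝ)) * U).submatrix e e := rfl
    have h2 : Uᵀ * (K - lam • (1 : Matrix (Fin n) (Fin n) ℝ)) * U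
        = Matrix.diagonal β - lam • (1 : Matrix (Fin n) (Fin n) ℝ) := by
      rw [Matrix.mul_assoc, Matrix.sub_mul, hKU', Matrix.mul_sub, ← Matrix.mul_assoc, hU]
      simp [hU]
    rw [h, h2]
    have h3 : ∑ i, max (β i - lam) 0 = ∑ i ∈ S, (β i - lam) := by
      rw [hS, Finset.sum_filter]
      refine Finset.sum_congr rfl fun i _ => ?_
      split_ifs with hi
      · exact max_eq_left (by linarith)
      · exact max_eq_right (by linarith)
    rw [h3, ← Finset.sum_coe_sort, ← Equiv.sum_comp S.equivFin.symm]
    simp [Matrix.trace, e]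
end

section
/- Let A be a symmetric n×n real matrix with nonnegative entries (the adjacency matrix of a graph on vertex set V = {1,…,n}), assume each degree d_i = ∑_j A_{ij} is strictly positive, let D = diag(d_1,…,d_n), let σ ∈ ℝ, and set K = σ D^{−1} + D^{−1} A D^{−1} and weights w_i = d_i. For any partition {V_1, …, V_k} of V into k nonempty clusters, define the weighted kernel k-means objective J(K, W) = ∑_{c=1}^k [ ∑_{i ∈ V_c} d_i K_{ii} − ( ∑_{i ∈ V_c} ∑_{j ∈ V_c} d_i d_j K_{ij} ) / ( ∑_{i ∈ V_c} d_i ) ] and the k-way normalized cut Cut(A) = ∑_{c=1}^k ( ∑_{i ∈ V_c} ∑_{j ∉ V_c} A_{ij} ) / ( ∑_{i ∈ V_c} d_i ). Then J(K, W) = σ n + tr( D^{−1/2} A D^{−1/2} ) − (σ + 1) k + Cut(A). (Theorem 5.3, the identity relating weighted kernel k-means and normalized cut.) -/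
open Finset Matrix

/-- Theorem 5.3: for a graph with symmetric nonnegative adjacency matrix `A`
and positive degrees, setting `K = σ D⁻¹ + D⁻¹ A D⁻¹` and weights `w i = d i`,
the weighted kernel k-means objective of any clustering into `k` nonempty
clusters (the fibers of the surjective map `z`) equals
`σ n + tr (D^{-1/2} A D^{-1/2}) - (σ + 1) k + Cut(A)`, where `Cut(A)` is the
k-way normalized cut. -/
theorem weighted_kernel_kmeans_eq_normalized_cut
    (n k : ℕ)
    (A : Matrix (Fin n) (Fin n) ℝ) (hA : A.IsSymm)
    (hApos : ∀ i j, 0 ≤ A i j)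
    (deg : Fin n → ℝ) (hdeg : ∀ i, deg i = ∑ j, A i j)
    (hdegpos : ∀ i, 0 < deg i)
    (σ : ℝ)
    (K : Matrix (Fin n) (Fin n) ℝ)
    (hK : K = σ • Matrix.diagonal (fun i => (deg i)⁻¹)
        + Matrix.diagonal (fun i => (deg i)⁻¹) * A * Matrix.diagonal (fun i => (deg i)⁻¹))
    (z : Fin n → Fin k) (hz : Function.Surjective z) :
    (∑ c, ((∑ i ∈ Finset.univ.filter (fun i => z i = c), deg i * K i i)
        - (∑ i ∈ Finset.univ.filter (fun i => z i = c),
            ∑ j ∈ Finset.univ.filter (fun j => z j = c), deg i * deg j * K i j)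
          / (∑ i ∈ Finset.univ.filter (fun i => z i = c), deg i)))
    = σ * (n : ℝ)
      + Matrix.trace (Matrix.diagonal (fun i => (Real.sqrt (deg i))⁻¹) * A
          * Matrix.diagonal (fun i => (Real.sqrt (deg i))⁻¹))
      - (σ + 1) * (k : ℝ)
      + ∑ c, (∑ i ∈ Finset.univ.filter (fun i => z i = c),
            ∑ j ∈ Finset.univ.filter (fun j => z j ≠ c), A i j)
          / (∑ i ∈ Finset.univ.filter (fun i => z i = c), deg i) := by
  have hne : ∀ i, deg i ≠ 0 := fun i => (hdegpos i).ne'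
  have hKij : ∀ i j, deg i * deg j * K i j = (if i = j then σ * deg i else 0) + A i j := by
    intro i j
    have h1 := hne i
    have h2 := hne j
    rw [hK, Matrix.add_apply, Matrix.smul_apply, Matrix.mul_diagonal, Matrix.diagonal_mul]
    by_cases h : i = j
    · subst h
      simp only [Matrix.diagonal_apply_eq, if_true, smul_eq_mul]
      field_simp
    · simp only [Matrix.diagonal_apply_ne _ h, if_neg h, smul_zero, zero_add]
      field_simp
  have hKii : ∀ i, deg i * K i i = σ + A i i / deg i := by
    intro i
    have h := hKij i i
    have h1 := hne i
    rw [if_pos rfl] at h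
    field_simp
    linarith
  have htr : Matrix.trace (Matrix.diagonal (fun i => (Real.sqrt (deg i))⁻¹) * A
          * Matrix.diagonal (fun i => (Real.sqrt (deg i))⁻¹)) = ∑ i, A i i / deg i := by
    unfold Matrix.trace
    refine Finset.sum_congr rfl fun i _ => ?_
    rw [Matrix.diag_apply, Matrix.mul_diagonal, Matrix.diagonal_mul]
    have h2 : (Real.sqrt (deg i))⁻¹ * (Real.sqrt (deg i))⁻¹ = (deg i)⁻¹ := by
      rw [← mul_inv, Real.mul_self_sqrt (hdegpos i).le]
    rw [div_eq_mul_inv, ← h2]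
    ring
  have hc : ∀ c, (∑ i ∈ Finset.univ.filter (fun i => z i = c),
            ∑ j ∈ Finset.univ.filter (fun j => z j = c), deg i * deg j * K i j)
          / (∑ i ∈ Finset.univ.filter (fun i => z i = c), deg i)
      = (σ + 1) - (∑ i ∈ Finset.univ.filter (fun i => z i = c),
            ∑ j ∈ Finset.univ.filter (fun j => z j ≠ c), A i j)
          / (∑ i ∈ Finset.univ.filter (fun i => z i = c), deg i) := by
    intro c
    have hpos : 0 < ∑ i ∈ Finset.univ.filter (fun i => z i = c), deg i := by
      obtain ⟨i, hi⟩ := hz c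
      exact Finset.sum_pos (fun i _ => hdegpos i) ⟨i, by simp [hi]⟩
    have hnum : (∑ i ∈ Finset.univ.filter (fun i => z i = c),
            ∑ j ∈ Finset.univ.filter (fun j => z j = c), deg i * deg j * K i j)
        = (σ + 1) * (∑ i ∈ Finset.univ.filter (fun i => z i = c), deg i)
          - ∑ i ∈ Finset.univ.filter (fun i => z i = c),
            ∑ j ∈ Finset.univ.filter (fun j => z j ≠ c), A i j := by
      rw [Finset.mul_sum, ← Finset.sum_sub_distrib]
      refine Finset.sum_congr rfl fun i hi => ?_
      have hs := Finset.sum_filter_add_sum_filter_not Finset.univ (fun j => z j = c)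
        (fun j => A i j)
      rw [← hdeg i] at hs
      simp only [hKij]
      rw [Finset.sum_add_distrib, Finset.sum_ite_eq, if_pos hi]
      simp only [ne_eq]
      linarith
    rw [hnum, sub_div, mul_div_cancel_right₀ _ hpos.ne']
  simp only [hc, hKii, htr]
  rw [Finset.sum_sub_distrib, Finset.sum_sub_distrib,
    Finset.sum_fiberwise Finset.univ z (fun i => σ + A i i / deg i), Finset.sum_add_distrib]
  simp only [Finset.sum_const, Finset.card_univ, Fintype.card_fin, nsmul_eq_mul]
  ring
end

section
/- Let A be a symmetric n×n real matrix with nonnegative entries, with positive degrees d_i = ∑_j A_{ij}, D = diag(d_1,…,d_n), σ ∈ ℝ, K = σ D^{−1} + D^{−1} A D^{−1}, and weights w_i = d_i. Then for any λ ∈ ℝ and any partition {V_1, …, V_k} of the vertices into k nonempty clusters, J(K, W) + λ k = C + Cut(A) + λ′ k, where C = σ n + tr( D^{−1/2} A D^{−1/2} ) is a constant independent of the partition and λ′ = λ − σ − 1. (Hence optimizing the penalized weighted kernel k-means objective with parameter λ is equivalent to optimizing the penalized normalized cut objective Cut(A) + λ′ k with λ′ = λ − σ − 1.) -/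
open Finset Matrix

/-- Penalized equivalence of weighted kernel k-means and normalized cut: with
`K = σ D⁻¹ + D⁻¹ A D⁻¹` and weights `w i = d i`, for every clustering into `k`
nonempty clusters (the fibers of the surjective map `z`) and every `λ`,
`J(K, W) + λ k = C + Cut(A) + λ' k`, where
`C = σ n + tr (D^{-1/2} A D^{-1/2})` is independent of the clustering and
`λ' = λ - σ - 1`. -/
theorem penalized_kernel_kmeans_eq_penalized_normalized_cut
    (n k : ℕ)
    (A : Matrix (Fin n) (Fin n) ℝ) (hA : A.IsSymm)
    (hApos : ∀ i j, 0 ≤ A i j)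
    (deg : Fin n → ℝ) (hdeg : ∀ i, deg i = ∑ j, A i j)
    (hdegpos : ∀ i, 0 < deg i)
    (σ : ℝ)
    (K : Matrix (Fin n) (Fin n) ℝ)
    (hK : K = σ • Matrix.diagonal (fun i => (deg i)⁻¹)
        + Matrix.diagonal (fun i => (deg i)⁻¹) * A * Matrix.diagonal (fun i => (deg i)⁻¹))
    (lam : ℝ)
    (z : Fin n → Fin k) (hz : Function.Surjective z) :
    (∑ c, ((∑ i ∈ Finset.univ.filter (fun i => z i = c), deg i * K i i)
        - (∑ i ∈ Finset.univ.filter (fun i => z i = c),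
            ∑ j ∈ Finset.univ.filter (fun j => z j = c), deg i * deg j * K i j)
          / (∑ i ∈ Finset.univ.filter (fun i => z i = c), deg i)))
      + lam * (k : ℝ)
    = (σ * (n : ℝ)
        + Matrix.trace (Matrix.diagonal (fun i => (Real.sqrt (deg i))⁻¹) * A
            * Matrix.diagonal (fun i => (Real.sqrt (deg i))⁻¹)))
      + (∑ c, (∑ i ∈ Finset.univ.filter (fun i => z i = c),
            ∑ j ∈ Finset.univ.filter (fun j => z j ≠ c), A i j)
          / (∑ i ∈ Finset.univ.filter (fun i => z i = c), deg i))
      + (lam - σ - 1) * (k : ℝ) := by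
  have hne : ∀ i, deg i ≠ 0 := fun i => (hdegpos i).ne'
  have hKij : ∀ i j, deg i * deg j * K i j = (if i = j then σ * deg i else 0) + A i j := by
    intro i j
    have h1 := hne i
    have h2 := hne j
    rw [hK, Matrix.add_apply, Matrix.mul_diagonal, Matrix.diagonal_mul, Matrix.smul_apply,
      Matrix.diagonal_apply]
    by_cases h : i = j
    · subst h
      simp only [if_true, smul_eq_mul]
      field_simp
    · simp only [if_neg h, smul_eq_mul]
      field_simp
      ring
  have hKii : ∀ i, deg i * K i i = σ + A i i / deg i := by
    intro i
    have h1 := hne i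
    have h := hKij i i
    rw [if_pos rfl] at h
    field_simp
    linarith
  have htr : Matrix.trace (Matrix.diagonal (fun i => (Real.sqrt (deg i))⁻¹) * A
      * Matrix.diagonal (fun i => (Real.sqrt (deg i))⁻¹)) = ∑ i, A i i / deg i := by
    unfold Matrix.trace
    refine Finset.sum_congr rfl fun i _ => ?_
    rw [Matrix.diag_apply, Matrix.mul_diagonal, Matrix.diagonal_mul]
    have h : (Real.sqrt (deg i))⁻¹ * (Real.sqrt (deg i))⁻¹ = (deg i)⁻¹ := by
      rw [← mul_inv, Real.mul_self_sqrt (hdegpos i).le]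
    rw [mul_right_comm, h, div_eq_mul_inv, mul_comm]
  have hc : ∀ c, (∑ i ∈ Finset.univ.filter (fun i => z i = c),
            ∑ j ∈ Finset.univ.filter (fun j => z j = c), deg i * deg j * K i j)
          / (∑ i ∈ Finset.univ.filter (fun i => z i = c), deg i)
      = σ + 1 - (∑ i ∈ Finset.univ.filter (fun i => z i = c),
            ∑ j ∈ Finset.univ.filter (fun j => z j ≠ c), A i j)
          / (∑ i ∈ Finset.univ.filter (fun i => z i = c), deg i) := by
    intro c
    have hpos : 0 < ∑ i ∈ Finset.univ.filter (fun i => z i = c), deg i := by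
      obtain ⟨i, hi⟩ := hz c
      exact Finset.sum_pos (fun i _ => hdegpos i) ⟨i, by simp [hi]⟩
    have key : (∑ i ∈ Finset.univ.filter (fun i => z i = c),
            ∑ j ∈ Finset.univ.filter (fun j => z j = c), deg i * deg j * K i j)
        + (∑ i ∈ Finset.univ.filter (fun i => z i = c),
            ∑ j ∈ Finset.univ.filter (fun j => z j ≠ c), A i j)
        = (σ + 1) * ∑ i ∈ Finset.univ.filter (fun i => z i = c), deg i := by
      rw [← Finset.sum_add_distrib, Finset.mul_sum]
      refine Finset.sum_congr rfl fun i hi => ?_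
      simp only [hKij]
      rw [Finset.sum_add_distrib, Finset.sum_ite_eq, if_pos hi, add_assoc,
        Finset.sum_filter_add_sum_filter_not, ← hdeg]
      ring
    rw [eq_sub_iff_add_eq, ← add_div, key, mul_div_assoc, div_self hpos.ne', mul_one]
  have hfib : ∑ c, ∑ i ∈ Finset.univ.filter (fun i => z i = c), deg i * K i i
      = σ * n + ∑ i, A i i / deg i := by
    rw [Finset.sum_fiberwise]
    simp only [hKii, Finset.sum_add_distrib, Finset.sum_const, Finset.card_univ,
      Fintype.card_fin, nsmul_eq_mul]
    ring
  rw [Finset.sum_sub_distrib, hfib, htr, Finset.sum_congr rfl fun c _ => hc c,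
    Finset.sum_sub_distrib]
  simp only [Finset.sum_const, Finset.card_univ, Fintype.card_fin, nsmul_eq_mul]
  ring
end

section
/- Let k ≥ 1, let d_1, …, d_k ≥ 0 and n_1, …, n_k > 0 be real numbers, let λ > 0, ρ > 0, and fix x ∈ ℝ^d. For σ > 0 define γ̂_new(σ) = exp( −λ/(2σ) − ‖x‖²/(2(ρ+σ)) ) / [ exp( −λ/(2σ) − ‖x‖²/(2(ρ+σ)) ) + ∑_{j=1}^k n_j exp( −d_j/(2σ) ) ]. If λ < min_{1 ≤ c ≤ k} d_c, then γ̂_new(σ) → 1 as σ → 0⁺. (Asymptotics of the DP-mixture Gibbs sampler: when the threshold λ is strictly smaller than every squared distance d_c = ‖x − μ_c‖², the probability of starting a new cluster tends to one.) -/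
open Filter Topology

/-- Asymptotics of the DP-mixture Gibbs sampler: if the threshold `λ` is
strictly smaller than every squared distance `dc c` to an existing cluster
mean, the Gibbs probability of starting a new cluster tends to one as
`σ → 0⁺`. -/
theorem gibbs_new_cluster_prob_tendsto_one
    (dim k : ℕ) (hk : 1 ≤ k)
    (dc : Fin k → ℝ) (hdc : ∀ c, 0 ≤ dc c)
    (nc : Fin k → ℝ) (hnc : ∀ c, 0 < nc c)
    (lam ρ : ℝ) (hlam : 0 < lam) (hρ : 0 < ρ)
    (x : EuclideanSpace ℝ (Fin dim))
    (hlt : ∀ c, lam < dc c) :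
    Filter.Tendsto
      (fun σ : ℝ =>
        Real.exp (-lam / (2 * σ) - ‖x‖ ^ 2 / (2 * (ρ + σ))) /
          (Real.exp (-lam / (2 * σ) - ‖x‖ ^ 2 / (2 * (ρ + σ)))
            + ∑ j, nc j * Real.exp (-dc j / (2 * σ))))
      (nhdsWithin 0 (Set.Ioi 0)) (nhds 1) := by
  have hB : Tendsto (fun σ : ℝ => ‖x‖ ^ 2 / (2 * (ρ + σ))) (𝓝[>] 0)
      (𝓝 (‖x‖ ^ 2 / (2 * (ρ + 0)))) := by
    refine Tendsto.mono_left ?_ nhdsWithin_le_nhds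
    have hc : ContinuousAt (fun σ : ℝ => ‖x‖ ^ 2 / (2 * (ρ + σ))) 0 := by
      refine ContinuousAt.div (by fun_prop) (by fun_prop) ?_
      simpa using hρ.ne'
    exact hc
  have hterm : ∀ j, Tendsto (fun σ : ℝ => nc j *
      Real.exp ((lam - dc j) / 2 * σ⁻¹ + ‖x‖ ^ 2 / (2 * (ρ + σ)))) (𝓝[>] 0) (𝓝 (nc j * 0)) := by
    intro j
    refine Tendsto.const_mul _ (Real.tendsto_exp_atBot.comp ?_)
    refine Tendsto.atBot_add ?_ hB
    exact tendsto_inv_nhdsGT_zero.const_mul_atTop_of_neg (by linarith [hlt j])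
  have hsum := tendsto_finsetSum Finset.univ (fun j _ => hterm j)
  have hlim := (hsum.const_add 1).inv₀ (by simp)
  simp only [mul_zero, Finset.sum_const_zero, add_zero, inv_one] at hlim
  refine hlim.congr ?_
  intro σ
  have hE := Real.exp_pos (-lam / (2 * σ) - ‖x‖ ^ 2 / (2 * (ρ + σ)))
  have hS : ∑ j, nc j * Real.exp (-dc j / (2 * σ)) =
      Real.exp (-lam / (2 * σ) - ‖x‖ ^ 2 / (2 * (ρ + σ))) *
        ∑ j, nc j * Real.exp ((lam - dc j) / 2 * σ⁻¹ + ‖x‖ ^ 2 / (2 * (ρ + σ))) := by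
    rw [Finset.mul_sum]
    refine Finset.sum_congr rfl fun j _ => ?_
    rw [mul_left_comm, ← Real.exp_add]
    congr 2
    rw [div_eq_mul_inv (-dc j), div_eq_mul_inv (-lam), mul_inv]
    ring
  rw [hS, ← mul_one_add, div_mul_cancel_left₀ hE.ne']
end

section
/- Let k ≥ 1, let d_1, …, d_k ≥ 0 and n_1, …, n_k > 0 be real numbers, let λ > 0, ρ > 0, and fix x ∈ ℝ^d. For σ > 0 and 1 ≤ c ≤ k define γ̂_c(σ) = n_c exp( −d_c/(2σ) ) / [ exp( −λ/(2σ) − ‖x‖²/(2(ρ+σ)) ) + ∑_{j=1}^k n_j exp( −d_j/(2σ) ) ]. If there is an index c* with d_{c*} < λ and d_{c*} < d_c for all c ≠ c*, then γ̂_{c*}(σ) → 1 as σ → 0⁺. (Asymptotics of the DP-mixture Gibbs sampler: when some existing cluster is strictly closest and closer than the threshold λ, the assignment probabilities become binary and concentrate on that cluster, yielding the hard reassignment rule of DP-means.) -/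
open Filter Topology

theorem gibbs_aux_exp (a : ℝ) (ha : 0 < a) :
    Filter.Tendsto (fun σ : ℝ => Real.exp (-a / (2 * σ))) (nhdsWithin 0 (Set.Ioi 0)) (nhds 0) := by
  have h1 : Filter.Tendsto (fun σ : ℝ => (a / 2) * σ⁻¹) (nhdsWithin 0 (Set.Ioi 0)) atTop :=
    tendsto_inv_nhdsGT_zero.const_mul_atTop (by positivity)
  refine (Real.tendsto_exp_neg_atTop_nhds_zero.comp h1).congr fun σ => ?_
  simp only [Function.comp]
  congr 1
  rw [neg_div, div_mul_eq_div_div, div_eq_mul_inv (a / 2)]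

/-- Asymptotics of the DP-mixture Gibbs sampler: if some existing cluster `c*`
is strictly closest (`dc c* < dc c` for all `c ≠ c*`) and closer than the
threshold (`dc c* < λ`), the Gibbs probability of assigning the point to `c*`
tends to one as `σ → 0⁺`. -/
theorem gibbs_existing_cluster_prob_tendsto_one
    (dim k : ℕ) (hk : 1 ≤ k)
    (dc : Fin k → ℝ) (hdc : ∀ c, 0 ≤ dc c)
    (nc : Fin k → ℝ) (hnc : ∀ c, 0 < nc c)
    (lam ρ : ℝ) (hlam : 0 < lam) (hρ : 0 < ρ)
    (x : EuclideanSpace ℝ (Fin dim))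
    (cstar : Fin k) (hcl : dc cstar < lam)
    (hmin : ∀ c, c ≠ cstar → dc cstar < dc c) :
    Filter.Tendsto
      (fun σ : ℝ =>
        nc cstar * Real.exp (-dc cstar / (2 * σ)) /
          (Real.exp (-lam / (2 * σ) - ‖x‖ ^ 2 / (2 * (ρ + σ)))
            + ∑ j, nc j * Real.exp (-dc j / (2 * σ))))
      (nhdsWithin 0 (Set.Ioi 0)) (nhds 1) := by
  have hS : Filter.Tendsto (fun σ : ℝ => ∑ j, nc j * Real.exp (-(dc j - dc cstar) / (2 * σ)))
      (nhdsWithin 0 (Set.Ioi 0)) (nhds (nc cstar)) := by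
    have : nc cstar = ∑ j, if j = cstar then nc cstar else 0 := by simp
    rw [this]
    refine tendsto_finsetSum _ fun j _ => ?_
    by_cases hj : j = cstar
    · subst hj
      simp
    · simpa [hj] using (gibbs_aux_exp _ (sub_pos.2 (hmin j hj))).const_mul (nc j)
  have hE : Filter.Tendsto (fun σ : ℝ => Real.exp (-(lam - dc cstar) / (2 * σ))
      * Real.exp (-(‖x‖ ^ 2 / (2 * (ρ + σ))))) (nhdsWithin 0 (Set.Ioi 0)) (nhds 0) := by
    have hc : ContinuousAt (fun σ : ℝ => Real.exp (-(‖x‖ ^ 2 / (2 * (ρ + σ))))) 0 := by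
      have : (2 * (ρ + 0)) ≠ 0 := by positivity
      fun_prop (disch := assumption)
    simpa using (gibbs_aux_exp _ (sub_pos.2 hcl)).mul (hc.tendsto.mono_left nhdsWithin_le_nhds)
  have hT := (tendsto_const_nhds (x := nc cstar)).div (hE.add hS)
    (by simpa using (hnc cstar).ne')
  rw [zero_add, div_self (hnc cstar).ne'] at hT
  refine hT.congr fun σ => ?_
  have key : ∀ b : ℝ, Real.exp (-b / (2 * σ))
      = Real.exp (-(b - dc cstar) / (2 * σ)) * Real.exp (-dc cstar / (2 * σ)) := by
    intro b
    rw [← Real.exp_add]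
    congr 1
    ring
  have hden : Real.exp (-lam / (2 * σ) - ‖x‖ ^ 2 / (2 * (ρ + σ)))
      + ∑ j, nc j * Real.exp (-dc j / (2 * σ))
      = (Real.exp (-(lam - dc cstar) / (2 * σ)) * Real.exp (-(‖x‖ ^ 2 / (2 * (ρ + σ))))
        + ∑ j, nc j * Real.exp (-(dc j - dc cstar) / (2 * σ)))
        * Real.exp (-dc cstar / (2 * σ)) := by
    rw [add_mul, Finset.sum_mul, sub_eq_add_neg, Real.exp_add, key lam]
    congr 1
    · ring
    · refine Finset.sum_congr rfl fun j _ => ?_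
      rw [key (dc j)]
      ring
  rw [hden, mul_div_mul_right _ _ (Real.exp_pos _).ne']
  rfl
end
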